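/- Let d be an odd prime, ω = exp(2πi/d), and for integers m, j define the Gauss sum G(m, j, d) = ∑_{k=0}^{d−1} ω^{k² + k(m+j+1)}. Then for all integers i, j, the product of d consecutive such Gauss sums satisfies ∏_{l=0}^{d−1} G(i+l, j, d) = ε_d^d · d^{d/2} · exp(−πi(d²−1)/6). -/

import Mathlib

/-!
Completing the square modulo `d` turns each factor into `g · ω^{-(n/2)²}`, where `n` is the class of
`m + j + 1` and `g = ∑ ω^{x²}` is the quadratic Gauss sum (`sum_stdAddChar_quadratic`). As `l` runs
over `0, …, d - 1`, `n` runs over all of `ℤ/d`, so the product is `g^d · ω^{-∑ (y/2)²}`. For `d > 3`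
the sum of all squares in `ℤ/d` vanishes, and the exponential on the right is `1` because `12`
divides `d² - 1`; for `d = 3` both are `ω` (`stdAddChar_sum_sq`).

As `d` is odd, `g^d` depends on the sign of `g`, so the full evaluation `g = ε_d √d` is needed. It is
the case `q = 2` of the Landsberg–Schaar reciprocity law (`gauss_reciprocity`),
`∑_{k<d} e(k²/d) = √d · (1+i)/2 · (1 + (-i)^d)`, proved here from the theta transformation formula.
The series `∑ₙ exp(-πAn²)` with `A = 1/s - 2i/d` is transformed by Poisson summation into one
with `1/A = w + id/2`, where `w → 0` as `s → ∞`. Both series are thus Gaussians of parameter tending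
to `0` (`1/s` and `w`), twisted by periodic functions, `e(n²/d)` of period `d` and `exp(-πidn²/2)` of period `2`. Splitting
such a series into residue classes and applying Poisson summation to each
(`tsum_periodic_gauss`) expresses it through theta series which tend to `1` (`tendsto_theta`), so
the leading asymptotics are the sums of the twists over one period. Comparing the two sides as
`s → ∞` gives the identity.
-/

noncomputable section

/-- `ε_d = 1` if `d ≡ 1 (mod 4)` and `ε_d = i` if `d ≡ 3 (mod 4)`. -/
def epsd (d : ℕ) : ℂ := if d % 4 = 1 then 1 else Complex.I

open Filter Topology

/-- The theta series `∑ₙ exp(-π a n²) e(-cn)`, of parameter `a` with positive real part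
and real characteristic `c`; it is the Poisson dual of a Gaussian series over `ℤ + c`. -/
def theta (a : ℂ) (c : ℝ) : ℂ :=
  ∑' n : ℤ, Complex.exp (-Real.pi * a * n ^ 2 + 2 * Real.pi * (-Complex.I * c) * n)

lemma norm_theta_term (a : ℂ) (c : ℝ) (n : ℤ) :
    ‖Complex.exp (-Real.pi * a * n ^ 2 + 2 * Real.pi * (-Complex.I * c) * n)‖ =
      Real.exp (-Real.pi * a.re * n ^ 2) := by
  have h : -(Real.pi : ℂ) * a * (n : ℂ) ^ 2 + 2 * Real.pi * (-Complex.I * c) * n =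
      ((-Real.pi * n ^ 2 : ℝ) : ℂ) * a + ((-(2 * Real.pi * c * n) : ℝ) : ℂ) * Complex.I := by
    push_cast; ring
  rw [h, Complex.norm_exp, Complex.add_re, Complex.re_ofReal_mul, Complex.re_ofReal_mul,
    Complex.I_re]
  congr 1; ring

lemma summable_gauss {t : ℝ} (ht : 0 < t) :
    Summable fun n : ℤ => Real.exp (-Real.pi * t * n ^ 2) := by
  have h := (summable_jacobiTheta₂_term_iff 0 (Complex.I * t)).2 (by simpa using ht)
  refine h.norm.congr fun n => ?_
  rw [norm_jacobiTheta₂_term]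
  congr 1; simp; ring

/-- As `Re a → ∞` only the term `n = 0` survives, by dominated convergence. -/
lemma tendsto_theta {a : ℝ → ℂ} (ha : Tendsto (fun s => (a s).re) atTop atTop) (c : ℝ) :
    Tendsto (fun s => theta (a s) c) atTop (𝓝 1) := by
  have key := tendsto_tsum_of_dominated_convergence (𝓕 := (atTop : Filter ℝ))
    (f := fun s (n : ℤ) =>
      Complex.exp (-Real.pi * a s * n ^ 2 + 2 * Real.pi * (-Complex.I * c) * n))
    (g := fun n : ℤ => if n = 0 then (1 : ℂ) else 0) (summable_gauss one_pos) ?_ ?_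
  · simpa [theta] using key
  · intro n
    rcases eq_or_ne n 0 with rfl | hn
    · simp
    · simp only [hn, if_false]
      rw [tendsto_zero_iff_norm_tendsto_zero]
      simp only [norm_theta_term]
      refine Real.tendsto_exp_atBot.comp ?_
      have hpos : 0 < Real.pi * (n : ℝ) ^ 2 := by positivity
      refine (tendsto_neg_atTop_atBot.comp (ha.const_mul_atTop hpos)).congr fun s => ?_
      simp; ring
  · filter_upwards [ha.eventually_ge_atTop 1] with s hs n
    rw [norm_theta_term]
    apply Real.exp_le_exp.2
    have : 0 ≤ Real.pi * (n : ℝ) ^ 2 := by positivity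
    nlinarith

/-- A Gaussian series twisted by a periodic function, split into residue classes mod `N`, each of
which is transformed by Poisson summation. The parameter of the Gaussian is `1 / (N² a)`, so its
behaviour near `0` is read off from the limit `Re a → ∞` on the right. -/
lemma tsum_periodic_gauss (N : ℕ) (hN : 0 < N) (F : ℤ → ℂ) (hF : ∀ q r : ℤ, F (q * N + r) = F r)
    (hF1 : ∀ n, ‖F n‖ ≤ 1) {a : ℂ} (ha : 0 < a.re) :
    ∑' n : ℤ, F n * Complex.exp (-Real.pi / (N ^ 2 * a) * n ^ 2) =
      a ^ (1 / 2 : ℂ) * ∑ r ∈ Finset.range N, F r * theta a (r / N) := by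
  have : NeZero N := ⟨hN.ne'⟩
  have hNC : (N : ℂ) ≠ 0 := by exact_mod_cast hN.ne'
  have ha0 : a ≠ 0 := by rintro rfl; simp at ha
  have hpow : a ^ (1 / 2 : ℂ) ≠ 0 := by simp [Complex.cpow_eq_zero_iff, ha0]
  have hinv : 0 < (1 / (N ^ 2 * a)).re := by
    have : (1 / (N ^ 2 * a) : ℂ) = ((1 / (N : ℝ) ^ 2 : ℝ) : ℂ) * a⁻¹ := by
      push_cast; field_simp
    rw [this, Complex.re_ofReal_mul, Complex.inv_re]
    have := Complex.normSq_pos.2 ha0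
    positivity
  have hsum : Summable fun n : ℤ => F n * Complex.exp (-Real.pi / (N ^ 2 * a) * n ^ 2) := by
    refine Summable.of_norm_bounded (summable_gauss hinv) fun n => ?_
    have h := norm_theta_term (1 / (N ^ 2 * a)) 0 n
    rw [← h, norm_mul]
    have e : -(Real.pi : ℂ) * (1 / (N ^ 2 * a)) * n ^ 2 +
        2 * Real.pi * (-Complex.I * (0 : ℝ)) * n = -Real.pi / (N ^ 2 * a) * n ^ 2 := by
      push_cast; ring
    rw [e]
    exact mul_le_of_le_one_left (norm_nonneg _) (hF1 n)
  let e : Fin N × ℤ ≃ ℤ := (Equiv.prodComm _ _).trans (Int.divModEquiv N).symm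
  have he : ∀ p, e p = p.2 * N + (p.1 : ℕ) := fun p => rfl
  rw [← e.tsum_eq]
  change ∑' p, ((fun n : ℤ => F n * Complex.exp (-Real.pi / (N ^ 2 * a) * n ^ 2)) ∘ e) p = _
  rw [((e.summable_iff).2 hsum).tsum_prod, tsum_fintype, Finset.mul_sum,
    Finset.sum_range]
  refine Finset.sum_congr rfl fun r _ => ?_
  simp only [Function.comp, he, hF]
  rw [tsum_mul_left, theta, Complex.tsum_exp_neg_quadratic ha, mul_left_comm]
  congr 1
  rw [← mul_assoc, mul_one_div_cancel hpow, one_mul]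
  refine tsum_congr fun n => ?_
  congr 1
  push_cast
  have : (n : ℂ) + Complex.I * (-Complex.I * (r / N)) = n + r / N := by
    linear_combination (-(r : ℂ) / N) * Complex.I_mul_I
  rw [this]
  field_simp

lemma sqrt_eq_of_sq {x y : ℂ} (h : y ^ 2 = x) (hy : 0 < y.re) : x ^ (1 / 2 : ℂ) = y := by
  rw [← h, one_div, Complex.sq_cpow_two_inv hy]

/-- The Landsberg–Schaar identity for the denominator `2`. No parity of `d` is assumed. -/
lemma gauss_reciprocity (d : ℕ) (hd : 0 < d) :
    ∑ k ∈ Finset.range d, Complex.exp (2 * Real.pi * Complex.I * k ^ 2 / d) =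
      Real.sqrt d * ((1 + Complex.I) / 2) * (1 + (-Complex.I) ^ d) := by
  have hdC : (d : ℂ) ≠ 0 := by exact_mod_cast hd.ne'
  have hdR : (0 : ℝ) < d := by exact_mod_cast hd
  -- The parameters are chosen so that `d² aL = s` and, with `w = 1 / (4 aR)`, the transformation
  -- `A ↦ 1/A` takes `1/s - 2i/d` to `w + id/2`; moreover `aR = aL · u` with `u → 1`.
  let aL : ℝ → ℂ := fun s => ((s / d ^ 2 : ℝ) : ℂ)
  let aR : ℝ → ℂ := fun s => ((s / d ^ 2 : ℝ) : ℂ) + ((1 / (2 * d) : ℝ) : ℂ) * Complex.I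
  let FL : ℤ → ℂ := fun n => Complex.exp (2 * Real.pi * Complex.I * n ^ 2 / d)
  let FR : ℤ → ℂ := fun n => Complex.exp (-(Real.pi * Complex.I * d * n ^ 2 / 2))
  have hLre : Tendsto (fun s => (aL s).re) atTop atTop := by
    simp only [aL, Complex.ofReal_re]
    exact tendsto_id.atTop_div_const (by positivity : (0 : ℝ) < d ^ 2)
  have hRre : Tendsto (fun s => (aR s).re) atTop atTop := by
    refine hLre.congr fun s => ?_
    simp only [aL, aR, Complex.add_re, Complex.re_ofReal_mul, Complex.I_re]; simp
  have hFLp : ∀ q r : ℤ, FL (q * d + r) = FL r := by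
    intro q r
    refine Complex.exp_eq_exp_iff_exists_int.2 ⟨q ^ 2 * d + 2 * q * r, ?_⟩
    push_cast; field_simp; ring
  have hFRp : ∀ q r : ℤ, FR (q * (2 : ℕ) + r) = FR r := by
    intro q r
    refine Complex.exp_eq_exp_iff_exists_int.2 ⟨-(d * (q ^ 2 + q * r)), ?_⟩
    push_cast; ring
  have hFL1 : ∀ n, ‖FL n‖ ≤ 1 := fun n => by
    have : (2 * Real.pi * Complex.I * n ^ 2 / d : ℂ) =
      ((2 * Real.pi * n ^ 2 / d : ℝ) : ℂ) * Complex.I := by push_cast; ring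
    simp only [FL]; rw [this, Complex.norm_exp_ofReal_mul_I]
  have hFR1 : ∀ n, ‖FR n‖ ≤ 1 := fun n => by
    have : (-(Real.pi * Complex.I * d * n ^ 2 / 2) : ℂ) =
      ((-(Real.pi * d * n ^ 2 / 2) : ℝ) : ℂ) * Complex.I := by push_cast; ring
    simp only [FR]; rw [this, Complex.norm_exp_ofReal_mul_I]
  let SL : ℝ → ℂ := fun s => ∑ r ∈ Finset.range d, FL r * theta (aL s) (r / d)
  let SR : ℝ → ℂ := fun s => ∑ r ∈ Finset.range 2, FR r * theta (aR s) (r / (2 : ℕ))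
  let u : ℝ → ℂ := fun s => 1 + ((d / 2 * s⁻¹ : ℝ) : ℂ) * Complex.I
  let A : ℝ → ℂ := fun s => ((s⁻¹ : ℝ) : ℂ) - ((2 / d : ℝ) : ℂ) * Complex.I
  have main : ∀ s : ℝ, 0 < s → SL s = 1 / A s ^ (1 / 2 : ℂ) * (u s ^ (1 / 2 : ℂ) * SR s) := by
    intro s hs
    have hsC : (s : ℂ) ≠ 0 := by exact_mod_cast hs.ne'
    have hL0 : 0 < (aL s).re := by simp only [aL, Complex.ofReal_re]; positivity
    have hR0 : 0 < (aR s).re := by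
      have : (aR s).re = s / d ^ 2 := by
        simp only [aR, Complex.add_re, Complex.re_ofReal_mul, Complex.I_re, Complex.ofReal_re]
        ring
      rw [this]; positivity
    have hA0 : 0 < (A s).re := by
      have : (A s).re = s⁻¹ := by
        simp only [A, Complex.sub_re, Complex.re_ofReal_mul, Complex.I_re, Complex.ofReal_re]
        ring
      rw [this]; positivity
    have hu0 : u s ≠ 0 := by
      intro h
      have := congrArg Complex.re h
      simp only [u, Complex.add_re, Complex.re_ofReal_mul, Complex.I_re] at this
      simp at this
    have haL0 : aL s ^ (1 / 2 : ℂ) ≠ 0 := by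
      have : aL s ≠ 0 := by intro h; simp [h] at hL0
      simp [Complex.cpow_eq_zero_iff, this]
    have hL := tsum_periodic_gauss d hd FL hFLp hFL1 hL0
    have hR := tsum_periodic_gauss 2 two_pos FR hFRp hFR1 hR0
    have hP := Complex.tsum_exp_neg_quadratic hA0 0
    have hq : (d : ℂ) - 2 * Complex.I * s ≠ 0 := by
      intro h
      have := congrArg Complex.re h
      simp at this
      exact hd.ne' this
    have hmul : aR s ^ (1 / 2 : ℂ) = aL s ^ (1 / 2 : ℂ) * u s ^ (1 / 2 : ℂ) := by
      -- `log (r x) = log r + log x` holds without branch issues because `r = s / d²` is a positive real.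
      have h1 : aR s = ((s / d ^ 2 : ℝ) : ℂ) * u s := by
        simp only [aR, u]; push_cast; field_simp
      have h2 : (0 : ℝ) < s / d ^ 2 := by positivity
      have h3 : ((s / d ^ 2 : ℝ) : ℂ) ≠ 0 := by exact_mod_cast h2.ne'
      rw [h1, Complex.cpow_def_of_ne_zero (mul_ne_zero h3 hu0), Complex.log_ofReal_mul h2 hu0,
        add_mul, Complex.exp_add, Complex.cpow_def_of_ne_zero hu0,
        Complex.cpow_def_of_ne_zero h3, Complex.ofReal_log h2.le]
    have e1 : ∑' n : ℤ, FL n * Complex.exp (-Real.pi / (d ^ 2 * aL s) * n ^ 2) =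
        ∑' n : ℤ, Complex.exp (-Real.pi * A s * n ^ 2 + 2 * Real.pi * 0 * n) := by
      refine tsum_congr fun n => ?_
      simp only [FL, aL, A]
      rw [← Complex.exp_add]
      congr 1
      push_cast; field_simp; ring
    have hA : -(Real.pi : ℂ) / A s = -(Real.pi * Complex.I * d / 2) +
        -Real.pi / ((2 : ℕ) ^ 2 * aR s) := by
      have h1 : A s = (d - 2 * Complex.I * s) / (s * d) := by
        simp only [A]; push_cast; field_simp
      have h2 : ((2 : ℕ) : ℂ) ^ 2 * aR s = 2 * Complex.I * (d - 2 * Complex.I * s) / d ^ 2 := by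
        simp only [aR]; push_cast; field_simp
        linear_combination (2 * s : ℂ) * Complex.I_sq
      rw [h1, h2]
      field_simp
      linear_combination (d - 2 * Complex.I * s : ℂ) * Complex.I_sq
    have e2 : ∑' n : ℤ, Complex.exp (-Real.pi / A s * (n + Complex.I * 0) ^ 2) =
        ∑' n : ℤ, FR n * Complex.exp (-Real.pi / ((2 : ℕ) ^ 2 * aR s) * n ^ 2) := by
      refine tsum_congr fun n => ?_
      simp only [FR]
      rw [← Complex.exp_add, hA]
      congr 1
      ring
    rw [e1, hP, e2, hR, hmul] at hL
    apply mul_left_cancel₀ haL0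
    rw [← hL]
    ring
  have hSL : Tendsto SL atTop (𝓝 (∑ r ∈ Finset.range d, FL r)) := by
    refine tendsto_finsetSum _ fun r _ => ?_
    simpa using (tendsto_theta hLre (r / d)).const_mul (FL r)
  have hSR : Tendsto SR atTop (𝓝 (∑ r ∈ Finset.range 2, FR r)) := by
    refine tendsto_finsetSum _ fun r _ => ?_
    simpa using (tendsto_theta hRre (r / (2 : ℕ))).const_mul (FR r)
  have hs : Tendsto (fun s : ℝ => s⁻¹) atTop (𝓝 0) := tendsto_inv_atTop_zero
  have hu : Tendsto (fun s => u s ^ (1 / 2 : ℂ)) atTop (𝓝 1) := by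
    have h0 : ContinuousAt (fun t : ℝ => (1 + ((d / 2 * t : ℝ) : ℂ) * Complex.I) ^ (1 / 2 : ℂ)) 0 :=
      ContinuousAt.cpow (by fun_prop) (by fun_prop) (by simp)
    have h1 := h0.tendsto.comp hs
    simp only [mul_zero, Complex.ofReal_zero, zero_mul, add_zero, Complex.one_cpow] at h1
    exact h1
  have hv : Tendsto (fun s => 1 / A s ^ (1 / 2 : ℂ)) atTop
      (𝓝 (Real.sqrt d * ((1 + Complex.I) / 2))) := by
    have hsq : (0 : ℝ) < Real.sqrt d := Real.sqrt_pos.2 hdR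
    have hsqC : ((Real.sqrt d : ℝ) : ℂ) ≠ 0 := by exact_mod_cast hsq.ne'
    have hsq2 : ((Real.sqrt d : ℝ) : ℂ) ^ 2 = d := by
      rw [← Complex.ofReal_pow, Real.sq_sqrt hdR.le]; simp
    have hy : (-(((2 / d : ℝ) : ℂ) * Complex.I)) ^ (1 / 2 : ℂ) =
        (((Real.sqrt d)⁻¹ : ℝ) : ℂ) * (1 - Complex.I) := by
      apply sqrt_eq_of_sq
      · rw [mul_pow]; push_cast; rw [inv_pow, hsq2]
        field_simp
        linear_combination Complex.I_sq
      · rw [Complex.re_ofReal_mul]; simpa using hsq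
    have h0 : ContinuousAt
        (fun t : ℝ => ((t : ℂ) - ((2 / d : ℝ) : ℂ) * Complex.I) ^ (1 / 2 : ℂ)) 0 := by
      refine ContinuousAt.cpow (by fun_prop) (by fun_prop) (Or.inr ?_)
      simp [hd.ne']
    have h1 := h0.tendsto.comp hs
    simp only [Complex.ofReal_zero, zero_sub] at h1
    rw [hy] at h1
    -- Invert the limit `√(-2i/d) = (1 - i)/√d`.
    have hI : (1 - Complex.I) ≠ 0 := by
      intro h
      have := congrArg Complex.re h
      simp at this
    have h2 := h1.inv₀ (mul_ne_zero (by simpa using hsq.ne') hI)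
    have h3 : ((((Real.sqrt d)⁻¹ : ℝ) : ℂ) * (1 - Complex.I))⁻¹ =
        Real.sqrt d * ((1 + Complex.I) / 2) := by
      push_cast; field_simp
      linear_combination Complex.I_sq
    rw [h3] at h2
    exact h2.congr fun s => (one_div _).symm
  have lim := hv.mul (hu.mul hSR)
  have := tendsto_nhds_unique hSL (lim.congr' (by
    filter_upwards [eventually_gt_atTop 0] with s hs using (main s hs).symm))
  have hFR : ∑ r ∈ Finset.range 2, FR r = 1 + (-Complex.I) ^ d := by
    have : FR 1 = (-Complex.I) ^ d := by
      rw [← Complex.exp_neg_pi_div_two_mul_I, ← Complex.exp_nat_mul]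
      simp only [FR]
      congr 1; push_cast; ring
    simp [Finset.sum_range_succ, this]
    simp [FR]
  rw [hFR, one_mul] at this
  simpa [FL] using this

lemma map_sum_stdAddChar (d : ℕ) [NeZero d] (f : ZMod d → ZMod d) :
    (ZMod.stdAddChar (∑ y, f y) : ℂ) = ∏ y, ZMod.stdAddChar (f y) := by
  exact map_prod (ZMod.stdAddChar (N := d)).toMonoidHom
    (fun y => Multiplicative.ofAdd (f y)) Finset.univ

lemma sum_range_zmod (d : ℕ) [NeZero d] (f : ZMod d → ℂ) :
    ∑ k ∈ Finset.range d, f (k : ℕ) = ∑ x : ZMod d, f x := by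
  refine Finset.sum_nbij' (fun k => (k : ZMod d)) ZMod.val (by simp)
    (fun x _ => Finset.mem_range.2 x.val_lt) ?_ (by simp) (by simp)
  intro k hk
  exact ZMod.val_cast_of_lt (Finset.mem_range.1 hk)

lemma prod_range_zmod (d : ℕ) [NeZero d] (f : ZMod d → ℂ) :
    ∏ k ∈ Finset.range d, f (k : ℕ) = ∏ x : ZMod d, f x := by
  refine Finset.prod_nbij' (fun k => (k : ZMod d)) ZMod.val (by simp)
    (fun x _ => Finset.mem_range.2 x.val_lt) ?_ (by simp) (by simp)
  intro k hk
  exact ZMod.val_cast_of_lt (Finset.mem_range.1 hk)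

/-- Gauss's evaluation of the quadratic Gauss sum, including its sign. -/
lemma sum_stdAddChar_sq (d : ℕ) [NeZero d] (hodd : Odd d) :
    ∑ x : ZMod d, ZMod.stdAddChar (x ^ 2) = epsd d * (Real.sqrt d : ℂ) := by
  have h := gauss_reciprocity d hodd.pos
  have h2 : ∑ k ∈ Finset.range d, Complex.exp (2 * Real.pi * Complex.I * k ^ 2 / d) =
      ∑ x : ZMod d, ZMod.stdAddChar (x ^ 2) := by
    rw [← sum_range_zmod d fun x => ZMod.stdAddChar (x ^ 2)]
    refine Finset.sum_congr rfl fun k _ => ?_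
    have := ZMod.stdAddChar_coe (N := d) ((k : ℤ) ^ 2)
    push_cast at this
    rw [this]
  rw [← h2, h, epsd]
  have hm : d % 4 = 1 ∨ d % 4 = 3 := by
    obtain ⟨m, rfl⟩ := hodd; omega
  have hI4 : (-Complex.I) ^ 4 = 1 := by
    rw [Even.neg_pow (by decide), Complex.I_pow_four]
  have hpow : (-Complex.I) ^ d = (-Complex.I) ^ (d % 4) := pow_eq_pow_mod d hI4
  rcases hm with hm | hm
  · rw [hpow, hm]; simp only [if_true]
    linear_combination (-(Real.sqrt d : ℂ) / 2) * Complex.I_sq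
  · rw [hpow, hm]; simp only [if_neg (show ¬ (3 = 1) by decide)]
    linear_combination (-(Real.sqrt d : ℂ) / 2) * (Complex.I_sq * (Complex.I ^ 2 + Complex.I - 1))

/-- Completing the square: `x² + xy = (x + y/2)² - (y/2)²`, valid as `2` is invertible mod `d`. -/
lemma sum_stdAddChar_quadratic (d : ℕ) [Fact d.Prime] (hodd : Odd d) (y : ZMod d) :
    ∑ x : ZMod d, ZMod.stdAddChar (x ^ 2 + x * y) =
      epsd d * (Real.sqrt d : ℂ) * ZMod.stdAddChar (-(y / 2) ^ 2) := by
  have h2 : (2 : ZMod d) ≠ 0 := by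
    have : ringChar (ZMod d) ≠ 2 := by
      rw [ZMod.ringChar_zmod_n]; rintro rfl; revert hodd; decide
    exact Ring.two_ne_zero this
  rw [← sum_stdAddChar_sq d hodd, Finset.sum_mul,
    ← Equiv.sum_comp (Equiv.addRight (y / 2)) fun x => ZMod.stdAddChar (x ^ 2) *
      (ZMod.stdAddChar (-(y / 2) ^ 2) : ℂ)]
  refine Finset.sum_congr rfl fun x _ => ?_
  rw [← AddChar.map_add_eq_mul]
  congr 1
  simp only [Equiv.coe_addRight]
  field_simp; ring

lemma neg_sum_sq_zmod_three : -(∑ y : ZMod 3, y ^ 2) = ((1 : ℤ) : ZMod 3) := by decide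

/-- The phase left over from completing the squares. The sum of all squares in `ℤ/d` is `0` unless
`d = 3`, a case checked directly. -/
lemma stdAddChar_sum_sq (d : ℕ) [hp : Fact d.Prime] (hodd : Odd d) :
    (ZMod.stdAddChar (-(∑ y : ZMod d, (y / 2) ^ 2)) : ℂ) =
      Complex.exp (-(Real.pi * Complex.I * ((d : ℂ) ^ 2 - 1)) / 6) := by
  have h3 : 3 ≤ d := by
    have := hp.out.two_le
    obtain ⟨m, rfl⟩ := hodd; omega
  rcases h3.eq_or_lt with rfl | h3
  · have : (-(∑ y : ZMod 3, (y / 2) ^ 2)) = ((1 : ℤ) : ZMod 3) := by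
      have h4 : (2 : ZMod 3) ^ 2 = 1 := rfl
      simp only [div_pow, h4, div_one]
      exact neg_sum_sq_zmod_three
    rw [this, ZMod.stdAddChar_coe]
    refine Complex.exp_eq_exp_iff_exists_int.2 ⟨1, ?_⟩
    push_cast; ring
  · have hsum : ∑ y : ZMod d, (y / 2) ^ 2 = 0 := by
      simp only [div_pow]
      rw [← Finset.sum_div, FiniteField.sum_pow_lt_card_sub_one, zero_div]
      rw [ZMod.card]
      obtain ⟨m, rfl⟩ := hodd; omega
    rw [hsum, neg_zero, AddChar.map_zero_eq_one, eq_comm, Complex.exp_eq_one_iff]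
    -- Divisibility by `12` is what makes `π (d² - 1) / 6` a multiple of `2π`.
    have h3d : ¬ 3 ∣ d := fun h => by
      have := (Nat.prime_dvd_prime_iff_eq Nat.prime_three hp.out).1 h
      omega
    have h12 : (12 : ℤ) ∣ (d : ℤ) ^ 2 - 1 := by
      have : d % 12 = 1 ∨ d % 12 = 5 ∨ d % 12 = 7 ∨ d % 12 = 11 := by
        obtain ⟨m, rfl⟩ := hodd; omega
      apply Int.dvd_of_emod_eq_zero
      have h : (d : ℤ) % 12 = 1 ∨ (d : ℤ) % 12 = 5 ∨ (d : ℤ) % 12 = 7 ∨ (d : ℤ) % 12 = 11 := by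
        omega
      rcases h with h | h | h | h <;> simp [pow_two, Int.sub_emod, Int.mul_emod, h]
    obtain ⟨c, hc⟩ := h12
    have hc' : (d : ℂ) ^ 2 - 1 = 12 * c := by exact_mod_cast congrArg (Int.cast : ℤ → ℂ) hc
    refine ⟨-c, ?_⟩
    rw [hc']; push_cast; ring

/-- the product of `d` consecutive Gauss sums
`G(m,j,d) = ∑_{k=0}^{d-1} ω^{k² + k(m+j+1)}` equals
`ε_d^d · d^{d/2} · exp(−πi(d²−1)/6)` for an odd prime `d`. -/
theorem product_of_consecutive_gauss_sums
    (d : ℕ) (hd : d.Prime) (hodd : Odd d)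
    (ω : ℂ) (hω : ω = Complex.exp (2 * Real.pi * Complex.I / d))
    (G : ℤ → ℤ → ℂ)
    (hG : ∀ m j : ℤ, G m j =
      ∑ k ∈ Finset.range d, ω ^ ((k : ℤ) ^ 2 + (k : ℤ) * (m + j + 1)))
    (i j : ℤ) :
    ∏ l ∈ Finset.range d, G (i + (l : ℤ)) j =
      epsd d ^ d * (Real.sqrt d : ℂ) ^ d *
        Complex.exp (-(Real.pi * Complex.I * ((d : ℂ) ^ 2 - 1)) / 6) := by
  have : Fact d.Prime := ⟨hd⟩
  have hωpow : ∀ n : ℤ, ω ^ n = ZMod.stdAddChar (n : ZMod d) := fun n => by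
    rw [ZMod.stdAddChar_coe, hω, ← Complex.exp_int_mul]
    congr 1; ring
  have hG' : ∀ m : ℤ, G m j = epsd d * (Real.sqrt d : ℂ) *
      ZMod.stdAddChar (-(((m + j + 1 : ℤ) : ZMod d) / 2) ^ 2) := fun m => by
    rw [hG, ← sum_stdAddChar_quadratic d hodd,
      ← sum_range_zmod d fun x => ZMod.stdAddChar (x ^ 2 + x * ((m + j + 1 : ℤ) : ZMod d))]
    refine Finset.sum_congr rfl fun k _ => ?_
    rw [hωpow]; push_cast; rfl
  have hprod : ∏ l ∈ Finset.range d,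
      (ZMod.stdAddChar (-(((i + l + j + 1 : ℤ) : ZMod d) / 2) ^ 2) : ℂ) =
      ZMod.stdAddChar (-(∑ y : ZMod d, (y / 2) ^ 2)) := by
    rw [← Finset.sum_neg_distrib, map_sum_stdAddChar,
      ← Equiv.prod_comp (Equiv.addRight ((i + j + 1 : ℤ) : ZMod d)), ← prod_range_zmod d]
    refine Finset.prod_congr rfl fun l _ => ?_
    simp only [Equiv.coe_addRight]
    push_cast
    congr 4; ring
  simp only [hG']
  rw [Finset.prod_mul_distrib, Finset.prod_const, Finset.card_range, hprod,
    stdAddChar_sum_sq d hodd, mul_pow]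

end
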